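/- Let τ be a matching of [2n] and let σ be a noncrossing partition of [n]. Then τ(σ) ≤ τ in the uncrossing order if and only if I_a(f_τ) ≤_a I_a(σ) for every a ∈ [2n], in the a-shifted dominance order. -/

import Mathlib

open Finset

noncomputable section
open scoped Classical

/-- The cyclic (clockwise) half-open interval `(a, b]` in `Fin m`. -/
def cIoc {m : ℕ} (a b : Fin m) : Finset (Fin m) :=
  univ.filter fun k => if a < b then a < k ∧ k ≤ b else a < k ∨ k ≤ b

/-- The open cyclic (clockwise) arc from `a` to `b` in `Fin m`, excluding both endpoints. -/
def cIoo {m : ℕ} (a b : Fin m) : Finset (Fin m) :=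
  univ.filter fun k => if a < b then a < k ∧ k < b else (a < k ∨ k < b) ∧ k ≠ a ∧ k ≠ b

/-- Set partitions of `[n] = Fin n`. -/
abbrev NCP (n : ℕ) := Finpartition (univ : Finset (Fin n))

/-- `a` and `b` lie in the same block of `σ`. -/
def sameBlock {n : ℕ} (σ : NCP n) (a b : Fin n) : Prop :=
  ∃ B ∈ σ.parts, a ∈ B ∧ b ∈ B

/-- `σ` is a noncrossing partition: there are no `a < b < c < d` with `a, c` in one
block and `b, d` in a different block. -/
def IsNoncrossing {n : ℕ} (σ : NCP n) : Prop :=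
  ∀ a b c d : Fin n, a < b → b < c → c < d →
    sameBlock σ a c → sameBlock σ b d → sameBlock σ a b

/-- The relation defining the dual (Kreweras complement) partition: `ĩ ~ j̃` iff no block
of `σ` meets both cyclic intervals `{(i+1), …, j}` and `{(j+1), …, i}`. -/
def dualRel {n : ℕ} (σ : NCP n) (i j : Fin n) : Prop :=
  i = j ∨ ¬ ∃ B ∈ σ.parts, (B ∩ cIoc i j).Nonempty ∧ (B ∩ cIoc j i).Nonempty

/-- The point `ī` of `[2n]` (0-based: `ī = 2i`). -/
def bar {n : ℕ} (i : Fin n) : Fin (2*n) := ⟨2*(i:ℕ), by have := i.isLt; omega⟩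

/-- The point `ĩ` of `[2n]` (0-based: `ĩ = 2i+1`). -/
def til {n : ℕ} (i : Fin n) : Fin (2*n) := ⟨2*(i:ℕ)+1, by have := i.isLt; omega⟩

/-- A matching (fixed-point-free involution) of `Fin m`. -/
def IsMatching {m : ℕ} (τ : Fin m → Fin m) : Prop :=
  Function.Involutive τ ∧ ∀ i, τ i ≠ i

/-- A noncrossing matching: there are no `a < b < c < d` with `τ a = c` and `τ b = d`. -/
def IsNCMatching {m : ℕ} (τ : Fin m → Fin m) : Prop :=
  ¬ ∃ a b c d : Fin m, a < b ∧ b < c ∧ c < d ∧ τ a = c ∧ τ b = d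

/-- `j` is the cyclic predecessor of `i` in the block of `σ` containing `i`
(`j = i` when `i` is a singleton). -/
def cyclicPred {n : ℕ} (σ : NCP n) (j i : Fin n) : Prop :=
  ∃ B ∈ σ.parts, i ∈ B ∧ j ∈ B ∧ ∀ x ∈ B, x ∉ cIoo j i

/-- `m` is the medial pairing of `σ`: it pairs `ī` (0-based `2i`) with `j̃` (0-based `2j+1`),
where `j` is the cyclic predecessor of `i` in its block. -/
def IsMedialOf {n : ℕ} (σ : NCP n) (m : Fin (2*n) → Fin (2*n)) : Prop :=
  ∀ i j : Fin n, m (bar i) = til j ↔ cyclicPred σ j i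

/-- The crossing number of a matching: the number of pairs `{a,b}` with
`a < b < τ a < τ b`. -/
def crossNum {m : ℕ} (τ : Fin m → Fin m) : ℕ :=
  ((univ : Finset (Fin m × Fin m)).filter fun p =>
    p.1 < p.2 ∧ p.2 < τ p.1 ∧ τ p.1 < τ p.2).card

/-- `a`, `b`, `c`, `d` are distinct and in cyclic order on `Fin m`. -/
def CyclicOrder4 {m : ℕ} (a b c d : Fin m) : Prop :=
  (a < b ∧ b < c ∧ c < d) ∨ (b < c ∧ c < d ∧ d < a) ∨
  (c < d ∧ d < a ∧ a < b) ∨ (d < a ∧ a < b ∧ b < c)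

/-- `τ` covers `τ'` in the uncrossing order. -/
def UncrossCover {m : ℕ} (τ' τ : Fin m → Fin m) : Prop :=
  IsMatching τ' ∧ IsMatching τ ∧
  ∃ a b c d : Fin m, CyclicOrder4 a b c d ∧ τ a = c ∧ τ b = d ∧
    (∀ x, x ≠ a → x ≠ b → x ≠ c → x ≠ d → τ' x = τ x) ∧
    ((τ' a = d ∧ τ' b = c ∧ ∀ x ∈ cIoo a b, τ x ∉ cIoo c d) ∨
     (τ' a = b ∧ τ' c = d ∧ ∀ x ∈ cIoo b c, τ x ∉ cIoo d a))

/-- The uncrossing partial order on matchings: reflexive-transitive closure of covers. -/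
def uncrossLE {m : ℕ} (τ' τ : Fin m → Fin m) : Prop :=
  Relation.ReflTransGen UncrossCover τ' τ

/-- An affine permutation of period `m`. -/
def IsAffinePerm (m : ℕ) (f : ℤ → ℤ) : Prop :=
  Function.Bijective f ∧ ∀ i : ℤ, f (i + m) = f i + m

/-- The length of an affine permutation of period `m`:
`#{(i,j) : 1 ≤ i ≤ m, i < j, f i > f j}`. -/
def affLen (m : ℕ) (f : ℤ → ℤ) : ℕ :=
  Set.ncard {p : ℤ × ℤ | 1 ≤ p.1 ∧ p.1 ≤ (m:ℤ) ∧ p.1 < p.2 ∧ f p.2 < f p.1}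

/-- The affine rank matrix `r_f(i,j) = #{a ≤ i : f a ≥ j}`. -/
def rankMat (f : ℤ → ℤ) (i j : ℤ) : ℕ :=
  Set.ncard {a : ℤ | a ≤ i ∧ j ≤ f a}

/-- Affine Bruhat order via rank matrices. -/
def bruhatLE (f g : ℤ → ℤ) : Prop := ∀ i j : ℤ, rankMat f i j ≤ rankMat g i j

/-- The sum `Σ_{i=1}^m (f i − i)`. -/
def windowSum (m : ℕ) (f : ℤ → ℤ) : ℤ :=
  ∑ i ∈ Finset.range m, (f ((i:ℤ)+1) - ((i:ℤ)+1))

/-- The affine permutation `g_τ` associated to a matching `τ` of `[2n]`: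
on `[2n]`, `g_τ i = τ i` if `τ i > i` and `g_τ i = τ i + 2n` if `τ i < i`,
extended periodically. -/
def gTau (n : ℕ) (τ : Fin (2*n) → Fin (2*n)) (i : ℤ) : ℤ :=
  if h : (i % ((2*n : ℕ) : ℤ)).toNat < 2*n then
    let r : Fin (2*n) := ⟨(i % ((2*n : ℕ) : ℤ)).toNat, h⟩
    (i - i % ((2*n : ℕ) : ℤ)) +
      (if r < τ r then ((τ r : ℕ) : ℤ) else ((τ r : ℕ) : ℤ) + 2*n)
  else i

/-- `f_τ = g_τ − 1`. -/
def fTau (n : ℕ) (τ : Fin (2*n) → Fin (2*n)) (i : ℤ) : ℤ := gTau n τ i - 1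

/-- An electrical affine permutation for `n`. -/
def IsElectrical (n : ℕ) (f : ℤ → ℤ) : Prop :=
  IsAffinePerm (2*n) f ∧
  (∀ i : ℤ, i ≤ f i ∧ f i ≤ i + 2*n - 2) ∧
  windowSum (2*n) f = ((n:ℤ) - 1) * (2*n) ∧
  ∀ i : ℤ, (f (f i + 1) - (i - 1)) % ((2*n : ℕ) : ℤ) = 0

/-- The Grassmann necklace subset `I_a(f) ⊆ [m]`: representatives in `[m]` (0-based) of
`{f b mod m : b < a and f b ≥ a}`. -/
def necklaceI (m : ℕ) (f : ℤ → ℤ) (a : ℤ) : Finset (Fin m) :=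
  univ.filter fun x => ∃ b : ℤ, b < a ∧ a ≤ f b ∧ f b % (m:ℤ) = ((x:ℕ):ℤ)

/-- The dual necklace subset `J_a(f) ⊆ [m]`: representatives in `[m]` (0-based) of
`{b mod m : b < a and f b ≥ a}`. -/
def necklaceJ (m : ℕ) (f : ℤ → ℤ) (a : ℤ) : Finset (Fin m) :=
  univ.filter fun x => ∃ b : ℤ, b < a ∧ a ≤ f b ∧ b % (m:ℤ) = ((x:ℕ):ℤ)

/-- Dominance order on `k`-element subsets of `Fin m`:
the `r`-th smallest element of `I` is at most the `r`-th smallest element of `J`. -/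
def domLE {m : ℕ} (k : ℕ) (I J : Finset (Fin m)) : Prop :=
  ∃ (hI : I.card = k) (hJ : J.card = k),
    ∀ r : Fin k, I.orderEmbOfFin hI r ≤ J.orderEmbOfFin hJ r

/-- `a`-shifted dominance order: rotate so that `a` becomes least, then compare. -/
def sdomLE {m : ℕ} (k : ℕ) (a : Fin m) (I J : Finset (Fin m)) : Prop :=
  domLE k (I.image (· - a)) (J.image (· - a))

/-- `a`-shifted lexicographic order on subsets of `Fin m`. -/
def lexLE {m : ℕ} (a : Fin m) (I J : Finset (Fin m)) : Prop :=
  I = J ∨ List.Lex (· < ·) ((I.image (· - a)).sort (· ≤ ·)) ((J.image (· - a)).sort (· ≤ ·))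

/-- A Catalan subset of `[2n]` (0-based): an `(n−1)`-subset such that the length-`2n`
word with `U` at positions `{0} ∪ {x+1 : x ∈ I}` and `D` elsewhere is a Dyck path. -/
def IsCatalan {n : ℕ} (I : Finset (Fin (2*n))) : Prop :=
  I.card = n - 1 ∧
  ∀ p : ℕ, p ≤ 2*n →
    p ≤ 2 * ((insert 0 (I.image fun x => (x:ℕ)+1)).filter (· < p)).card

/-- Catalan subset with respect to the shifted order `≤_a`. -/
def IsCatalanAt {n : ℕ} (a : Fin (2*n)) (I : Finset (Fin (2*n))) : Prop :=
  IsCatalan (I.image (· - a))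

/-- The set of maxima of `S` with respect to the `a`-shifted order. -/
def maxAt {m : ℕ} (a : Fin m) (S : Finset (Fin m)) : Finset (Fin m) :=
  S.filter fun x => ∀ y ∈ S, y - a ≤ x - a

/-- `I_a(σ)` for a noncrossing partition `σ`: the complement in `[2n]` of the set of
`≤_a`-maxima of the blocks of `σ` (embedded by `bar`) and of the blocks of the dual
partition `σ̃` (embedded by `til`). -/
def IaP {n : ℕ} (σ : NCP n) (a : Fin (2*n)) : Finset (Fin (2*n)) :=
  univ \ ((σ.parts.biUnion fun B => maxAt a (B.image bar)) ∪
          ((univ : Finset (Fin n)).biUnion fun i =>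
            maxAt a ((univ.filter (dualRel σ i)).image til)))

/-- `I` is concordant with `σ`: `I` has `n−1` elements and every block of `σ` and of
its dual `σ̃` contains exactly one element of `[2n] ∖ I`. -/
def Concordant {n : ℕ} (σ : NCP n) (I : Finset (Fin (2*n))) : Prop :=
  I.card = n - 1 ∧
  (∀ B ∈ σ.parts, ((B.image bar) ∩ (univ \ I)).card = 1) ∧
  (∀ i : Fin n, (((univ.filter (dualRel σ i)).image til) ∩ (univ \ I)).card = 1)

/-- `E(I)`: the set of noncrossing partitions concordant with `I`. -/
def ESet {n : ℕ} (I : Finset (Fin (2*n))) : Set (NCP n) :=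
  {σ | IsNoncrossing σ ∧ Concordant σ I}

/-- The maximal minor `Δ_I(X)` on the columns indexed by `I`, in increasing order. -/
def minorOn {k m : ℕ} (X : Matrix (Fin k) (Fin m) ℝ) (I : Finset (Fin m)) : ℝ :=
  if h : I.card = k then (X.submatrix id fun r => I.orderEmbOfFin h r).det else 0

/-- `X` is totally nonnegative: it has full rank `k` and all maximal minors are `≥ 0`. -/
def IsTNN {k m : ℕ} (X : Matrix (Fin k) (Fin m) ℝ) : Prop :=
  X.rank = k ∧ ∀ I : Finset (Fin m), I.card = k → 0 ≤ minorOn X I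

/-- `t` times the matrix unit `E_{p,q}` (0-based indices). -/
def matE (m : ℕ) (p q : ℕ) (t : ℝ) : Matrix (Fin m) (Fin m) ℝ :=
  Matrix.of fun r s => if (r:ℕ) = p ∧ (s:ℕ) = q then t else 0

/-- `x_i(t) = Id + t·E_{i,i+1}` (1-based index `i`). -/
def xB (m i : ℕ) (t : ℝ) : Matrix (Fin m) (Fin m) ℝ := 1 + matE m (i-1) i t

/-- `y_i(t) = Id + t·E_{i+1,i}` (1-based index `i`). -/
def yB (m i : ℕ) (t : ℝ) : Matrix (Fin m) (Fin m) ℝ := 1 + matE m i (i-1) t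

/-- `u_i(t) = x_i(t)·y_{i−1}(t)` (1-based index `i`). -/
def uB (m i : ℕ) (t : ℝ) : Matrix (Fin m) (Fin m) ℝ := xB m i t * yB m (i-1) t

/-- The columns of `X`, extended `n`-periodically to all integer indices (0-based). -/
def colP {k n : ℕ} (X : Matrix (Fin k) (Fin n) ℝ) (i : ℤ) : Fin k → ℝ :=
  fun r => if h : (i % (n:ℤ)).toNat < n then X r ⟨(i % (n:ℤ)).toNat, h⟩ else 0

/-- `f_X(i) = min { j ≥ i : v_i ∈ span(v_{i+1}, …, v_j) }` (0-based columns). -/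
def fX {k n : ℕ} (X : Matrix (Fin k) (Fin n) ℝ) (i : ℤ) : ℤ :=
  sInf {j : ℤ | i ≤ j ∧ colP X i ∈ Submodule.span ℝ (colP X '' Set.Ioc i j)}

/-- Fintype instance for finite partitions of a finite set. -/
instance {α : Type*} [DecidableEq α] [Fintype α] (s : Finset α) : Fintype (Finpartition s) :=
  Fintype.ofInjective Finpartition.parts fun _ _ h => Finpartition.ext h

/-- The sorted list of (the values of) a subset of `Fin m`. -/
def sortedL {m : ℕ} (I : Finset (Fin m)) : List ℕ :=
  (I.sort (· ≤ ·)).map Fin.val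

/-- The number of inversions of a list (= the number of adjacent transpositions
needed to sort it, when entries are distinct). -/
def invNum (l : List ℕ) : ℕ :=
  ((Finset.range l.length ×ˢ Finset.range l.length).filter fun pq =>
    pq.1 < pq.2 ∧ l.getD pq.2 0 < l.getD pq.1 0).card

/-- The subset of `Fin m` whose values lie in the list `l`. -/
def toFinF {m : ℕ} (l : List ℕ) : Finset (Fin m) :=
  univ.filter fun x => (x:ℕ) ∈ l

/-- The double sum `Σ_{σ ∈ E(l), κ ∈ E(l')} L σ · L κ`, where `E` of a list with a
repeated entry (or an out-of-range entry) is empty. -/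
def pairSum {n : ℕ} (L : NCP n → ℝ) (l l' : List ℕ) : ℝ :=
  if (l.Nodup ∧ ∀ x ∈ l, x < 2*n) ∧ (l'.Nodup ∧ ∀ x ∈ l', x < 2*n) then
    ∑ᶠ σ ∈ ESet (n := n) (toFinF l), ∑ᶠ κ ∈ ESet (n := n) (toFinF l'), L σ * L κ
  else 0

/-- The list obtained from `LI` by replacing its entries at the positions in `S`
(in increasing order of position) by the first `#S` entries of `LJ`. -/
def swapI (LI LJ : List ℕ) (S : Finset ℕ) : List ℕ :=
  (List.range LI.length).map fun p =>
    if p ∈ S then LJ.getD ((S.filter (· < p)).card) 0 else LI.getD p 0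

/-- The list obtained from `LJ` by replacing its first `#S` entries by the entries of
`LI` at the positions in `S`, in increasing order. -/
def swapJ (LI LJ : List ℕ) (S : Finset ℕ) : List ℕ :=
  (List.range LJ.length).map fun p =>
    if p < S.card then LI.getD ((S.sort (· ≤ ·)).getD p 0) 0 else LJ.getD p 0

/-- Twice the number of pairs of `τ` joining the point set `s` to its complement. -/
def cutNum {N : ℕ} (τ : Fin N → Fin N) (s : Fin N → Prop) : ℕ :=
  ∑ i, if (s i ↔ s (τ i)) then 0 else 1

/-- The linear interval `[x, y)`, as a predicate on `Fin N`. -/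
def inIco {N : ℕ} (x y : ℕ) (i : Fin N) : Prop := x ≤ (i : ℕ) ∧ (i : ℕ) < y

/-- The clockwise distance from `a` to `x`. -/
def cycDist {N : ℕ} (a x : Fin N) : ℕ := if (a : ℕ) ≤ x then (x : ℕ) - a else x + N - a

lemma cycDist_lt {N : ℕ} (a x : Fin N) : cycDist a x < N := by
  have := a.isLt
  have := x.isLt
  unfold cycDist
  split_ifs <;> omega

lemma cycDist_inj {N : ℕ} {a x y : Fin N} (h : cycDist a x = cycDist a y) : x = y := by
  have := x.isLt
  have := y.isLt
  unfold cycDist at h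
  ext
  split_ifs at h <;> omega

lemma sub_val_eq_cycDist {N : ℕ} (a x : Fin N) : ((x - a : Fin N) : ℕ) = cycDist a x := by
  have := a.isLt
  have := x.isLt
  unfold cycDist
  rw [Fin.sub_def]
  simp only
  split_ifs with h
  · rw [show N - (a : ℕ) + x = (x - a) + N by omega, Nat.add_mod_right, Nat.mod_eq_of_lt (by omega)]
  · rw [Nat.mod_eq_of_lt (by omega)]
    omega

lemma cutNum_compl {N : ℕ} (τ : Fin N → Fin N) (s : Fin N → Prop) :
    cutNum τ (fun i => ¬ s i) = cutNum τ s := by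
  unfold cutNum
  exact sum_congr rfl fun i _ => by simp only [not_iff_not]

/-- The points of the initial segment `κ < t` whose partner comes later, for a key `κ`. -/
def openerCount {N : ℕ} (τ : Fin N → Fin N) (κ : Fin N → ℕ) (t : ℕ) : ℕ :=
  (univ.filter fun i => κ i < t ∧ κ i < κ (τ i)).card

lemma cutNum_add_eq_openerCount {N : ℕ} {τ : Fin N → Fin N} (hτ : IsMatching τ)
    {κ : Fin N → ℕ} (hκ : Function.Injective κ) {s : Fin N → Prop} {t : ℕ}
    (hs : ∀ i, s i ↔ κ i < t) :
    cutNum τ s + 2 * (univ.filter s).card = 4 * openerCount τ κ t := by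
  have hsum : ∀ F : Fin N → ℕ, ∑ i, F (τ i) = ∑ i, F i := fun F =>
    Equiv.sum_comp (Function.Involutive.toPerm τ hτ.1) F
  have h1 := hsum fun i => if s i then 1 else 0
  have h2 := hsum fun i => if κ i < t ∧ κ i < κ (τ i) then 1 else 0
  have key : ∀ i, (if (s i ↔ s (τ i)) then 0 else 1) +
      ((if s i then 1 else 0) + (if s (τ i) then 1 else 0)) =
      2 * (if κ i < t ∧ κ i < κ (τ i) then 1 else 0) +
      2 * (if κ (τ i) < t ∧ κ (τ i) < κ (τ (τ i)) then 1 else 0) := by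
    intro i
    rw [hτ.1 i]
    have : κ i ≠ κ (τ i) := fun h => hτ.2 i (hκ h).symm
    simp only [hs]
    split_ifs <;> omega
  have := sum_congr (rfl : (univ : Finset (Fin N)) = univ) fun i _ => key i
  simp only [sum_add_distrib, ← mul_sum] at this
  unfold cutNum openerCount
  rw [card_filter, card_filter]
  beta_reduce at h1 h2
  omega

lemma inIco_iff_cycDist {N : ℕ} (x : Fin N) (y : ℕ) (hy : y ≤ N) (i : Fin N) :
    inIco x y i ↔ cycDist x i < y - x := by
  have := i.isLt
  have := x.isLt
  unfold inIco cycDist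
  split_ifs <;> omega

lemma cutNum_empty {N : ℕ} (τ : Fin N → Fin N) {x y : ℕ} (h : y ≤ x ∨ N ≤ x) :
    cutNum τ (inIco x y) = 0 := by
  refine sum_eq_zero fun i _ => ?_
  have := i.isLt
  have := (τ i).isLt
  unfold inIco
  rw [if_pos]
  omega

lemma inIco_min {N : ℕ} (x y : ℕ) : (inIco x (min y N) : Fin N → Prop) = inIco x y := by
  funext i
  have := i.isLt
  unfold inIco
  simp only [eq_iff_iff]
  omega

/-- The cut numbers of a fixed interval for two matchings agree modulo `4`. -/
lemma cutNum_mod_four {N : ℕ} {m τ : Fin N → Fin N} (hm : IsMatching m) (hτ : IsMatching τ)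
    (x y : ℕ) : cutNum m (inIco x y) % 4 = cutNum τ (inIco x y) % 4 := by
  by_cases hx : x < N
  · rw [← inIco_min]
    have e : ∀ i : Fin N, inIco x (min y N) i ↔ cycDist ⟨x, hx⟩ i < min y N - x :=
      inIco_iff_cycDist ⟨x, hx⟩ _ (min_le_right y N)
    have h1 := cutNum_add_eq_openerCount hm (fun _ _ h => cycDist_inj h) e
    have h2 := cutNum_add_eq_openerCount hτ (fun _ _ h => cycDist_inj h) e
    beta_reduce at h1 h2
    omega
  · rw [cutNum_empty m (Or.inr (by omega)), cutNum_empty τ (Or.inr (by omega))]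

/-- The effect of an uncrossing on cut numbers. -/
lemma cutNum_uncross {N : ℕ} {τ τ' : Fin N → Fin N} (hτ : IsMatching τ) (hτ' : IsMatching τ')
    {a b c d : Fin N} (hab : a ≠ b) (hac : a ≠ c) (had : a ≠ d) (hbc : b ≠ c) (hbd : b ≠ d)
    (hcd : c ≠ d) (h1 : τ a = c) (h2 : τ b = d)
    (h : ∀ x, x ≠ a → x ≠ b → x ≠ c → x ≠ d → τ' x = τ x)
    (h3 : τ' a = d) (h4 : τ' b = c) (s : Fin N → Prop) :
    cutNum τ' s + 2 * ((if (s a ↔ s c) then 0 else 1) + (if (s b ↔ s d) then 0 else 1)) =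
      cutNum τ s + 2 * ((if (s a ↔ s d) then 0 else 1) + (if (s b ↔ s c) then 0 else 1)) := by
  have h5 : τ c = a := by rw [← h1, hτ.1]
  have h6 : τ d = b := by rw [← h2, hτ.1]
  have h7 : τ' d = a := by rw [← h3, hτ'.1]
  have h8 : τ' c = b := by rw [← h4, hτ'.1]
  have hr : ∑ i ∈ (univ \ {a, b, c, d} : Finset (Fin N)), (if (s i ↔ s (τ' i)) then 0 else 1) =
      ∑ i ∈ (univ \ {a, b, c, d} : Finset (Fin N)), (if (s i ↔ s (τ i)) then 0 else 1) := by
    refine sum_congr rfl fun i hi => ?_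
    simp only [mem_sdiff, mem_univ, true_and, mem_insert, mem_singleton, not_or] at hi
    rw [h i hi.1 hi.2.1 hi.2.2.1 hi.2.2.2]
  unfold cutNum
  rw [← sum_sdiff (subset_univ ({a, b, c, d} : Finset (Fin N))),
    ← sum_sdiff (s₂ := univ) (subset_univ ({a, b, c, d} : Finset (Fin N))), hr]
  rw [sum_insert (by simp [*]), sum_insert (by simp [*]), sum_insert (by simp [*]), sum_singleton,
    sum_insert (by simp [*]), sum_insert (by simp [*]), sum_insert (by simp [*]), sum_singleton,
    h1, h2, h3, h4, h5, h6, h7, h8]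
  simp only [iff_comm (a := s c), iff_comm (a := s d)]
  ring

lemma CyclicOrder4.rotate {N : ℕ} {a b c d : Fin N} (h : CyclicOrder4 a b c d) :
    CyclicOrder4 b c d a := by
  unfold CyclicOrder4 at *
  tauto

lemma cutNum_uncross_le {N : ℕ} {τ τ' : Fin N → Fin N} (hτ : IsMatching τ)
    (hτ' : IsMatching τ') {a b c d : Fin N} (hc : CyclicOrder4 a b c d) (h1 : τ a = c)
    (h2 : τ b = d) (h : ∀ x, x ≠ a → x ≠ b → x ≠ c → x ≠ d → τ' x = τ x)
    (h3 : τ' a = d) (h4 : τ' b = c) (x y : ℕ) :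
    cutNum τ' (inIco x y) ≤ cutNum τ (inIco x y) := by
  unfold CyclicOrder4 at hc
  simp only [Fin.lt_def] at hc
  have := cutNum_uncross hτ hτ' (by rw [Ne, Fin.ext_iff]; omega) (by rw [Ne, Fin.ext_iff]; omega)
    (by rw [Ne, Fin.ext_iff]; omega) (by rw [Ne, Fin.ext_iff]; omega)
    (by rw [Ne, Fin.ext_iff]; omega) (by rw [Ne, Fin.ext_iff]; omega) h1 h2 h h3 h4 (inIco x y)
  have key : (if (inIco x y a ↔ inIco x y d) then 0 else 1) +
      (if (inIco x y b ↔ inIco x y c) then 0 else 1) ≤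
      (if (inIco x y a ↔ inIco x y c) then 0 else 1) +
      (if (inIco x y b ↔ inIco x y d) then 0 else 1) := by
    unfold inIco
    split_ifs <;> omega
  omega

lemma UncrossCover.cutNum_le {N : ℕ} {τ τ' : Fin N → Fin N} (h : UncrossCover τ' τ) (x y : ℕ) :
    cutNum τ' (inIco x y) ≤ cutNum τ (inIco x y) := by
  obtain ⟨hτ', hτ, a, b, c, d, hc, h1, h2, hag, ⟨h3, h4, -⟩ | ⟨h3, h4, -⟩⟩ := h
  · exact cutNum_uncross_le hτ hτ' hc h1 h2 hag h3 h4 x y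
  · refine cutNum_uncross_le hτ hτ' hc.rotate h2 (by rw [← h1, hτ.1])
      (fun z hb hc hd ha => hag z ha hb hc hd) (by rw [← h3, hτ'.1]) h4 x y

lemma uncrossLE.cutNum_le {N : ℕ} {τ τ' : Fin N → Fin N} (h : uncrossLE τ' τ) (x y : ℕ) :
    cutNum τ' (inIco x y) ≤ cutNum τ (inIco x y) := by
  induction h with
  | refl => rfl
  | tail _ h ih => exact ih.trans (h.cutNum_le x y)

/-- Twice the number of pairs of `τ` joining two disjoint point sets. -/
def joinNum {N : ℕ} (τ : Fin N → Fin N) (s t : Fin N → Prop) : ℕ :=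
  ∑ i, if (s i ∧ t (τ i)) ∨ (t i ∧ s (τ i)) then 1 else 0

lemma joinNum_pos {N : ℕ} {τ : Fin N → Fin N} {s t : Fin N → Prop} {i : Fin N}
    (h1 : s i) (h2 : t (τ i)) : 0 < joinNum τ s t :=
  sum_pos' (fun _ _ => Nat.zero_le _) ⟨i, mem_univ i, by rw [if_pos (Or.inl ⟨h1, h2⟩)]; exact one_pos⟩

lemma exists_of_joinNum_ne_zero {N : ℕ} {τ : Fin N → Fin N} (hτ : IsMatching τ)
    {s t : Fin N → Prop} (h : joinNum τ s t ≠ 0) : ∃ i, s i ∧ t (τ i) := by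
  obtain ⟨i, -, hi⟩ := exists_ne_zero_of_sum_ne_zero h
  rcases ite_ne_right_iff.1 hi with ⟨hi | hi, -⟩
  · exact ⟨i, hi⟩
  · exact ⟨τ i, hi.2, by rw [hτ.1]; exact hi.1⟩

lemma cutNum_add_cutNum_inter_union {N : ℕ} (τ : Fin N → Fin N) {p q r s : ℕ} (h1 : p ≤ q)
    (h2 : q ≤ r) (h3 : r ≤ s) :
    cutNum τ (inIco p r) + cutNum τ (inIco q s) =
      cutNum τ (inIco q r) + cutNum τ (inIco p s) + 2 * joinNum τ (inIco p q) (inIco r s) := by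
  unfold cutNum joinNum
  rw [mul_sum, ← sum_add_distrib, ← sum_add_distrib, ← sum_add_distrib]
  refine sum_congr rfl fun i _ => ?_
  generalize τ i = j
  unfold inIco
  generalize (i : ℕ) = u, (j : ℕ) = v
  rcases lt_or_ge u p with a | a <;> rcases lt_or_ge u q with b | b <;>
  rcases lt_or_ge u r with c | c <;> rcases lt_or_ge u s with d | d <;> try omega
  all_goals
    rcases lt_or_ge v p with a' | a' <;> rcases lt_or_ge v q with b' | b' <;>
    rcases lt_or_ge v r with c' | c' <;> rcases lt_or_ge v s with d' | d' <;> first | omega | skip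
  all_goals
    simp [a, b, c, d, a', b', c', d', not_le.2, not_lt.2]

lemma cutNum_add_cutNum_diff {N : ℕ} (τ : Fin N → Fin N) {p q r s : ℕ} (h1 : p ≤ q)
    (h2 : q ≤ r) (h3 : r ≤ s) :
    cutNum τ (inIco p r) + cutNum τ (inIco q s) =
      cutNum τ (inIco p q) + cutNum τ (inIco r s) +
        2 * joinNum τ (inIco q r) (fun i => ¬ inIco p s i) := by
  unfold cutNum joinNum
  rw [mul_sum, ← sum_add_distrib, ← sum_add_distrib, ← sum_add_distrib]
  refine sum_congr rfl fun i _ => ?_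
  generalize τ i = j
  unfold inIco
  beta_reduce
  generalize (i : ℕ) = u, (j : ℕ) = v
  rcases lt_or_ge u p with a | a <;> rcases lt_or_ge u q with b | b <;>
  rcases lt_or_ge u r with c | c <;> rcases lt_or_ge u s with d | d <;> try omega
  all_goals
    rcases lt_or_ge v p with a' | a' <;> rcases lt_or_ge v q with b' | b' <;>
    rcases lt_or_ge v r with c' | c' <;> rcases lt_or_ge v s with d' | d' <;> first | omega | skip
  all_goals
    simp [a, b, c, d, a', b', c', d', not_le.2, not_lt.2]

/-- Two tight intervals cannot separate the two pairs of a crossing in both possible ways. -/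
lemma not_tight_of_crossing {N : ℕ} {m τ : Fin N → Fin N} (hm : IsMatching m)
    (hnc : IsNCMatching m) (hle : ∀ x y, cutNum m (inIco x y) ≤ cutNum τ (inIco x y))
    {p q r s : ℕ} (h1 : p ≤ q) (h2 : q ≤ r) (h3 : r ≤ s)
    (ht1 : cutNum τ (inIco p r) ≤ cutNum m (inIco p r))
    (ht2 : cutNum τ (inIco q s) ≤ cutNum m (inIco q s))
    {i j : Fin N} (hi : inIco p q i) (hi' : inIco r s (τ i)) (hj : inIco q r j)
    (hj' : ¬ inIco p s (τ j)) : False := by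
  have a1 := cutNum_add_cutNum_inter_union m h1 h2 h3
  have a2 := cutNum_add_cutNum_inter_union τ h1 h2 h3
  have b1 := cutNum_add_cutNum_diff m h1 h2 h3
  have b2 := cutNum_add_cutNum_diff τ h1 h2 h3
  have p1 : 0 < joinNum τ (inIco p q) (inIco r s) := joinNum_pos hi hi'
  have p2 : 0 < joinNum τ (inIco q r) (fun i => ¬ inIco p s i) := joinNum_pos hj hj'
  have c1 := hle q r
  have c2 := hle p s
  have c3 := hle p q
  have c4 := hle r s
  obtain ⟨u, hu, hu'⟩ := exists_of_joinNum_ne_zero hm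
    (s := inIco p q) (t := inIco r s) (by omega)
  obtain ⟨v, hv, hv'⟩ := exists_of_joinNum_ne_zero hm
    (s := inIco q r) (t := fun i => ¬ inIco p s i) (by omega)
  unfold inIco at hu hu' hv hv'
  rcases lt_or_ge (m v : ℕ) p with h | h
  · exact hnc ⟨m v, u, v, m u, Fin.lt_def.2 (by omega), Fin.lt_def.2 (by omega),
      Fin.lt_def.2 (by omega), hm.1 v, rfl⟩
  · exact hnc ⟨u, v, m u, m v, Fin.lt_def.2 (by omega), Fin.lt_def.2 (by omega),
      Fin.lt_def.2 (by omega), rfl, rfl⟩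

/-- Every interval separating `{a, d}` from `{b, c}` has slack between `m` and `τ`. -/
def HasSlack {N : ℕ} (m τ : Fin N → Fin N) (a b c d : Fin N) : Prop :=
  ∀ x y : ℕ, (inIco x y a ↔ inIco x y d) → (inIco x y b ↔ inIco x y c) →
    ¬ (inIco x y a ↔ inIco x y b) → cutNum m (inIco x y) < cutNum τ (inIco x y)

lemma hasSlack_or_hasSlack {N : ℕ} {m τ : Fin N → Fin N} (hm : IsMatching m)
    (hnc : IsNCMatching m) (hτ : IsMatching τ)
    (hle : ∀ x y, cutNum m (inIco x y) ≤ cutNum τ (inIco x y)) {a b c d : Fin N}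
    (hab : a < b) (hbc : b < c) (hcd : c < d) (h1 : τ a = c) (h2 : τ b = d) :
    HasSlack m τ a b c d ∨ HasSlack m τ b c d a := by
  by_contra! h
  have h3 : τ c = a := by rw [← h1, hτ.1]
  unfold HasSlack at h
  push Not at h
  obtain ⟨⟨x, y, had, hbc', hab', ht⟩, x', y', hba, hcd', hbc'', ht'⟩ := h
  rw [Fin.lt_def] at hab hbc hcd
  have hxy : ((a : ℕ) < x ∧ x ≤ b) ∧ ((c : ℕ) < y ∧ y ≤ d) := by
    unfold inIco at had hbc' hab'
    omega
  have hxy' : ((x' ≤ a) ∧ ((b : ℕ) < y' ∧ y' ≤ c)) ∨ (((b : ℕ) < x' ∧ x' ≤ c) ∧ (d : ℕ) < y') := by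
    unfold inIco at hba hcd' hbc''
    omega
  rcases hxy' with hxy' | hxy'
  · exact not_tight_of_crossing (p := x') (q := x) (r := y') (s := y) (i := a) (j := b) hm hnc hle
      (by omega) (by omega) (by omega) ht' ht (by unfold inIco; omega)
      (by rw [h1]; unfold inIco; omega) (by unfold inIco; omega) (by rw [h2]; unfold inIco; omega)
  · exact not_tight_of_crossing (p := x) (q := x') (r := y) (s := y') (i := b) (j := c) hm hnc hle
      (by omega) (by omega) (by omega) ht ht' (by unfold inIco; omega)
      (by rw [h2]; unfold inIco; omega) (by unfold inIco; omega) (by rw [h3]; unfold inIco; omega)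

lemma HasSlack.shrink {N : ℕ} {m τ : Fin N → Fin N} {a b c d x z : Fin N}
    (hc : CyclicOrder4 a b c d) (h : HasSlack m τ a b c d) (hx : x ∈ cIoo a b)
    (hz : z ∈ cIoo c d) :
    CyclicOrder4 a x c z ∧ HasSlack m τ a x c z ∧ cycDist a x < cycDist a b := by
  unfold CyclicOrder4 at *
  unfold cIoo at hx hz
  simp only [mem_filter, mem_univ, true_and, Fin.lt_def, Ne, Fin.ext_iff] at hx hz hc ⊢
  have := a.isLt
  have := b.isLt
  have := x.isLt
  refine ⟨?_, fun p q h1 h2 h3 => ?_, ?_⟩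
  · split_ifs at hx hz <;> omega
  · unfold inIco at h1 h2 h3
    refine h p q ?_ ?_ ?_ <;> unfold inIco <;> split_ifs at hx hz <;> omega
  · unfold cycDist
    split_ifs at hx ⊢ <;> omega

lemma exists_cover_of_hasSlack {N : ℕ} {m τ : Fin N → Fin N} {a b c d : Fin N}
    (hc : CyclicOrder4 a b c d) (h2 : τ b = d)
    (h : HasSlack m τ a b c d) :
    ∃ b d, CyclicOrder4 a b c d ∧ τ b = d ∧ HasSlack m τ a b c d ∧
      ∀ x ∈ cIoo a b, τ x ∉ cIoo c d := by
  induction hk : cycDist a b using Nat.strong_induction_on generalizing b d with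
  | _ k ih =>
    by_cases hx : ∃ x ∈ cIoo a b, τ x ∈ cIoo c d
    · obtain ⟨x, hx, hz⟩ := hx
      obtain ⟨h3, h4, h5⟩ := h.shrink hc hx hz
      exact ih _ (hk ▸ h5) h3 rfl h4 rfl
    · push Not at hx
      exact ⟨b, d, hc, h2, h, hx⟩

/-- The matching obtained from `τ` by replacing two pairs by `{a, d}` and `{b, c}`. -/
def uncrossed {N : ℕ} (τ : Fin N → Fin N) (a b c d : Fin N) (x : Fin N) : Fin N :=
  if x = a then d else if x = d then a else if x = b then c else if x = c then b else τ x

lemma CyclicOrder4.ne {N : ℕ} {a b c d : Fin N} (h : CyclicOrder4 a b c d) :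
    a ≠ b ∧ a ≠ c ∧ a ≠ d ∧ b ≠ c ∧ b ≠ d ∧ c ≠ d := by
  unfold CyclicOrder4 at h
  simp only [Fin.lt_def, Ne, Fin.ext_iff] at *
  omega

lemma isMatching_uncrossed {N : ℕ} {τ : Fin N → Fin N} (hτ : IsMatching τ) {a b c d : Fin N}
    (hc : CyclicOrder4 a b c d) (h1 : τ a = c) (h2 : τ b = d) :
    IsMatching (uncrossed τ a b c d) := by
  obtain ⟨hab, hac, had, hbc, hbd, hcd⟩ := hc.ne
  have h5 : τ c = a := by rw [← h1, hτ.1]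
  have h6 : τ d = b := by rw [← h2, hτ.1]
  have hinv := hτ.1
  have hne := hτ.2
  unfold Function.Involutive at hinv
  refine ⟨fun x => ?_, fun x => ?_⟩
  · unfold uncrossed
    grind
  · unfold uncrossed
    grind

lemma uncrossCover_uncrossed {N : ℕ} {τ : Fin N → Fin N} (hτ : IsMatching τ) {a b c d : Fin N}
    (hc : CyclicOrder4 a b c d) (h1 : τ a = c) (h2 : τ b = d)
    (hx : ∀ x ∈ cIoo a b, τ x ∉ cIoo c d) : UncrossCover (uncrossed τ a b c d) τ := by
  obtain ⟨hab, hac, had, hbc, hbd, hcd⟩ := hc.ne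
  refine ⟨isMatching_uncrossed hτ hc h1 h2, hτ, a, b, c, d, hc, h1, h2, ?_, Or.inl ⟨?_, ?_, hx⟩⟩
  · intro x ha hb hc hd
    simp [uncrossed, *]
  · simp [uncrossed]
  · simp [uncrossed, hab.symm, hbd]

lemma le_cutNum_uncrossed {N : ℕ} {m τ : Fin N → Fin N} (hm : IsMatching m) (hτ : IsMatching τ)
    (hle : ∀ x y, cutNum m (inIco x y) ≤ cutNum τ (inIco x y)) {a b c d : Fin N}
    (hc : CyclicOrder4 a b c d) (h1 : τ a = c) (h2 : τ b = d) (hs : HasSlack m τ a b c d)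
    (x y : ℕ) : cutNum m (inIco x y) ≤ cutNum (uncrossed τ a b c d) (inIco x y) := by
  obtain ⟨hab, hac, had, hbc, hbd, hcd⟩ := hc.ne
  have hτ' := isMatching_uncrossed hτ hc h1 h2
  have e := cutNum_uncross hτ hτ' hab hac had hbc hbd hcd h1 h2
    (fun x ha hb hc hd => by simp [uncrossed, *]) (by simp [uncrossed])
    (by simp [uncrossed, hab.symm, hbd]) (inIco x y)
  have m1 := cutNum_mod_four hm hτ' x y
  have l := hle x y
  have m2 := cutNum_mod_four hm hτ x y
  by_cases hsep : (inIco x y a ↔ inIco x y d) ∧ (inIco x y b ↔ inIco x y c) ∧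
      ¬ (inIco x y a ↔ inIco x y b)
  · have := hs x y hsep.1 hsep.2.1 hsep.2.2
    split_ifs at e <;> omega
  · split_ifs at e <;> first | omega | (exfalso; tauto)

lemma exists_cutNum_uncrossed_lt {N : ℕ} {τ : Fin N → Fin N} (hτ : IsMatching τ)
    {a b c d : Fin N} (hc : CyclicOrder4 a b c d) (h1 : τ a = c) (h2 : τ b = d) :
    ∃ x ∈ range (N + 1), ∃ y ∈ range (N + 1),
      cutNum (uncrossed τ a b c d) (inIco x y) < cutNum τ (inIco x y) := by
  obtain ⟨hab, hac, had, hbc, hbd, hcd⟩ := hc.ne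
  have hτ' := isMatching_uncrossed hτ hc h1 h2
  have := a.isLt
  have := b.isLt
  have := c.isLt
  have := d.isLt
  obtain ⟨x, y, hx, hy, h⟩ : ∃ x y : ℕ, x ≤ N ∧ y ≤ N ∧ (inIco x y a ↔ inIco x y d) ∧
      (inIco x y b ↔ inIco x y c) ∧ ¬ (inIco x y a ↔ inIco x y b) := by
    unfold CyclicOrder4 at hc
    simp only [Fin.lt_def] at hc
    unfold inIco
    rcases lt_or_ge (b : ℕ) c with h | h
    · refine ⟨b, c + 1, ?_⟩
      omega
    · refine ⟨d, a + 1, ?_⟩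
      omega
  refine ⟨x, by simpa [Nat.lt_succ_iff] using hx, y, by simpa [Nat.lt_succ_iff] using hy, ?_⟩
  have e := cutNum_uncross hτ hτ' hab hac had hbc hbd hcd h1 h2
    (fun x ha hb hc hd => by simp [uncrossed, *]) (by simp [uncrossed])
    (by simp [uncrossed, hab.symm, hbd]) (inIco x y)
  rw [if_pos h.1, if_pos h.2.1, if_neg (by tauto), if_neg (by tauto)] at e
  omega

lemma cutNum_eq_zero {N : ℕ} {τ : Fin N → Fin N} {s : Fin N → Prop} :
    cutNum τ s = 0 ↔ ∀ i, s i ↔ s (τ i) := by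
  simp [cutNum]

lemma eq_of_cutNum_le {N : ℕ} {m τ : Fin N → Fin N} (hm : IsMatching m) (hτ : IsMatching τ)
    (hnc : IsNCMatching τ) (hle : ∀ x y, cutNum m (inIco x y) ≤ cutNum τ (inIco x y)) :
    m = τ := by
  have closed : ∀ i : Fin N, i < τ i → ∀ k : Fin N, (i < k ∧ k < τ i ↔ i < τ k ∧ τ k < τ i) := by
    have aux : ∀ i : Fin N, i < τ i → ∀ k : Fin N, i < k → k < τ i → i < τ k ∧ τ k < τ i := by
      intro i hi k h1 h2
      have n1 : τ k ≠ τ i := fun h => by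
        have := hτ.1.injective h
        omega
      have n2 : τ k ≠ i := fun h => by
        have := congrArg τ h
        rw [hτ.1] at this
        omega
      by_contra hcon
      rcases lt_or_ge (τ k) i with h | h
      · exact hnc ⟨τ k, i, k, τ i, h, h1, h2, hτ.1 k, rfl⟩
      · exact hnc ⟨i, k, τ i, τ k, h1, h2, by omega, rfl, rfl⟩
    intro i hi k
    refine ⟨fun h => aux i hi k h.1 h.2, fun h => ?_⟩
    have := aux i hi (τ k) h.1 h.2
    rwa [hτ.1] at this
  have main : ∀ i : Fin N, i < τ i → m i = τ i := by
    intro i hi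
    have hclosed := closed i hi
    have z1 : cutNum m (inIco (i : ℕ) (τ i + 1)) = 0 := by
      have : cutNum τ (inIco (i : ℕ) (τ i + 1)) = 0 := by
        refine cutNum_eq_zero.2 fun k => ?_
        have := hclosed k
        have e1 : k = i → τ k = τ i := fun h => by rw [h]
        have e2 : k = τ i → τ k = i := fun h => by rw [h, hτ.1]
        have e3 : τ k = τ i → k = i := fun h => hτ.1.injective h
        have e4 : τ k = i → k = τ i := fun h => by rw [← h, hτ.1]
        unfold inIco
        omega
      have := hle i (τ i + 1)
      omega
    have z2 : cutNum m (inIco (i + 1 : ℕ) (τ i)) = 0 := by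
      have : cutNum τ (inIco (i + 1 : ℕ) (τ i)) = 0 := by
        refine cutNum_eq_zero.2 fun k => ?_
        have := hclosed k
        unfold inIco
        omega
      have := hle (i + 1) (τ i)
      omega
    have w1 := cutNum_eq_zero.1 z1 i
    have w2 := cutNum_eq_zero.1 z2 i
    have := hm.2 i
    unfold inIco at w1 w2
    omega
  funext i
  rcases lt_or_ge i (τ i) with h | h
  · exact main i h
  · have h' : τ i < τ (τ i) := by
      rw [hτ.1]
      exact lt_of_le_of_ne h (hτ.2 i)
    have := main _ h'
    rw [hτ.1] at this
    rw [← this, hm.1, this]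

/-- A noncrossing matching lies below `τ` as soon as its interval cut numbers do. -/
theorem uncrossLE_of_cutNum_le {N : ℕ} {m τ : Fin N → Fin N} (hm : IsMatching m)
    (hnc : IsNCMatching m) (hτ : IsMatching τ)
    (hle : ∀ x y, cutNum m (inIco x y) ≤ cutNum τ (inIco x y)) : uncrossLE m τ := by
  induction hk : ∑ x ∈ range (N + 1), ∑ y ∈ range (N + 1), cutNum τ (inIco x y)
    using Nat.strong_induction_on generalizing τ with
  | _ k ih =>
    by_cases hn : IsNCMatching τ
    · rw [eq_of_cutNum_le hm hτ hn hle]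
      exact Relation.ReflTransGen.refl
    · obtain ⟨a, b, c, d, hab, hbc, hcd, h1, h2⟩ := not_not.1 hn
      have step : ∀ a b c d : Fin N, CyclicOrder4 a b c d → τ a = c → τ b = d →
          HasSlack m τ a b c d → uncrossLE m τ := by
        intro a b c d hc h1 h2 hs
        obtain ⟨b, d, hc, h2, hs, hx⟩ := exists_cover_of_hasSlack hc h2 hs
        have hcov := uncrossCover_uncrossed hτ hc h1 h2 hx
        refine Relation.ReflTransGen.tail (ih _ ?_ hcov.1
          (le_cutNum_uncrossed hm hτ hle hc h1 h2 hs) rfl) hcov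
        rw [← hk]
        obtain ⟨x, hx, y, hy, hlt⟩ := exists_cutNum_uncrossed_lt hτ hc h1 h2
        refine sum_lt_sum (fun x _ => sum_le_sum fun y _ => hcov.cutNum_le x y) ⟨x, hx, ?_⟩
        exact sum_lt_sum (fun y _ => hcov.cutNum_le x y) ⟨y, hy, hlt⟩
      rcases hasSlack_or_hasSlack hm hnc hτ hle hab hbc hcd h1 h2 with h | h
      · exact step a b c d (Or.inl ⟨hab, hbc, hcd⟩) h1 h2 h
      · exact step b c d a (CyclicOrder4.rotate (Or.inl ⟨hab, hbc, hcd⟩)) h2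
          (by rw [← h1, hτ.1]) h

lemma cutNum_congr {N : ℕ} (τ : Fin N → Fin N) {s s' : Fin N → Prop} (h : ∀ i, s i ↔ s' i) :
    cutNum τ s = cutNum τ s' := by
  rw [show s = s' from funext fun i => propext (h i)]

lemma cutNum_cycDist_eq_zero {N : ℕ} (τ : Fin N → Fin N) (a : Fin N) {t : ℕ} (ht : N ≤ t) :
    cutNum τ (fun i => cycDist a i < t) = 0 :=
  cutNum_eq_zero.2 fun i => by
    have := cycDist_lt a i
    have := cycDist_lt a (τ i)
    omega

/-- Comparing cut numbers on cyclic intervals amounts to comparing them on linear ones. -/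
lemma forall_cutNum_cycDist_le_iff {N : ℕ} (m τ : Fin N → Fin N) :
    (∀ (a : Fin N) (t : ℕ), cutNum m (fun i => cycDist a i < t) ≤
      cutNum τ (fun i => cycDist a i < t)) ↔
    ∀ x y, cutNum m (inIco x y) ≤ cutNum τ (inIco x y) := by
  refine ⟨fun h x y => ?_, fun h a t => ?_⟩
  · by_cases hx : x < N
    · have e : ∀ i : Fin N, inIco x (min y N) i ↔ cycDist ⟨x, hx⟩ i < min y N - x :=
        inIco_iff_cycDist ⟨x, hx⟩ _ (min_le_right y N)
      rw [← inIco_min, cutNum_congr m e, cutNum_congr τ e]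
      exact h _ _
    · rw [cutNum_empty m (Or.inr (by omega))]
      exact Nat.zero_le _
  · rcases le_or_gt N t with ht | ht
    · rw [cutNum_cycDist_eq_zero m a ht]
      exact Nat.zero_le _
    rcases le_or_gt ((a : ℕ) + t) N with hat | hat
    · have e : ∀ i : Fin N, cycDist a i < t ↔ inIco (a : ℕ) (a + t) i := fun i => by
        rw [inIco_iff_cycDist a _ hat]
        omega
      rw [cutNum_congr m e, cutNum_congr τ e]
      exact h _ _
    · have e : ∀ i : Fin N, cycDist a i < t ↔ ¬ inIco (a + t - N : ℕ) a i := fun i => by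
        have := i.isLt
        have := a.isLt
        unfold cycDist inIco
        split_ifs <;> omega
      rw [cutNum_congr m e, cutNum_congr τ e, cutNum_compl, cutNum_compl]
      exact h _ _

lemma orderEmbOfFin_lt_iff {m k : ℕ} {I : Finset (Fin m)} (hI : I.card = k) (r : Fin k) (t : ℕ) :
    (I.orderEmbOfFin hI r : ℕ) < t ↔ (r : ℕ) < (I.filter fun x : Fin m => (x : ℕ) < t).card := by
  have hc : (I.filter fun x : Fin m => (x : ℕ) < t).card =
      (univ.filter fun r : Fin k => (I.orderEmbOfFin hI r : ℕ) < t).card := by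
    rw [← card_image_of_injective _ (I.orderEmbOfFin hI).injective]
    congr 1
    ext x
    simp only [mem_filter, mem_image, mem_univ, true_and]
    constructor
    · rintro ⟨hx, ht⟩
      have : x ∈ Set.range (I.orderEmbOfFin hI) := by
        rw [range_orderEmbOfFin]
        exact hx
      obtain ⟨s, rfl⟩ := this
      exact ⟨s, ht, rfl⟩
    · rintro ⟨s, hs, rfl⟩
      exact ⟨orderEmbOfFin_mem I hI s, hs⟩
  rw [hc]
  constructor
  · intro h
    have : Iic r ⊆ univ.filter fun r : Fin k => (I.orderEmbOfFin hI r : ℕ) < t := by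
      intro s hs
      have hle : I.orderEmbOfFin hI s ≤ I.orderEmbOfFin hI r :=
        (I.orderEmbOfFin hI).monotone (mem_Iic.1 hs)
      rw [Fin.le_def] at hle
      simp only [mem_filter, mem_univ, true_and]
      omega
    have := card_le_card this
    rw [Fin.card_Iic] at this
    omega
  · intro h
    by_contra hcon
    have : (univ.filter fun r : Fin k => (I.orderEmbOfFin hI r : ℕ) < t) ⊆ Iio r := by
      intro s hs
      simp only [mem_filter, mem_univ, true_and] at hs
      rw [mem_Iio]
      by_contra hsr
      have hle : I.orderEmbOfFin hI r ≤ I.orderEmbOfFin hI s :=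
        (I.orderEmbOfFin hI).monotone (not_lt.1 hsr)
      rw [Fin.le_def] at hle
      omega
    have := card_le_card this
    rw [Fin.card_Iio] at this
    omega

lemma domLE_iff {m k : ℕ} {I J : Finset (Fin m)} (hI : I.card = k) (hJ : J.card = k) :
    domLE k I J ↔ ∀ t : ℕ,
      (J.filter fun x : Fin m => (x : ℕ) < t).card ≤ (I.filter fun x : Fin m => (x : ℕ) < t).card := by
  constructor
  · rintro ⟨hI, hJ, h⟩ t
    by_contra! hlt
    have hk : (J.filter fun x : Fin m => (x : ℕ) < t).card ≤ k := hJ ▸ card_filter_le _ _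
    have h1 := (orderEmbOfFin_lt_iff hJ ⟨_, hlt.trans_le hk⟩ t).2 hlt
    have h2 := Fin.le_def.1 (h ⟨_, hlt.trans_le hk⟩)
    exact lt_irrefl _ ((orderEmbOfFin_lt_iff hI ⟨_, hlt.trans_le hk⟩ t).1 (h2.trans_lt h1))
  · refine fun h => ⟨hI, hJ, fun r => ?_⟩
    have h1 := (orderEmbOfFin_lt_iff hJ r _).1 (Nat.lt_succ_self _)
    have h2 := (orderEmbOfFin_lt_iff hI r _).2 (h1.trans_le (h _))
    exact Fin.le_def.2 (by omega)

lemma sdomLE_iff {m k : ℕ} {a : Fin m} {I J : Finset (Fin m)} (hI : I.card = k)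
    (hJ : J.card = k) :
    sdomLE k a I J ↔ ∀ t : ℕ,
      (J.filter fun x => cycDist a x < t).card ≤ (I.filter fun x => cycDist a x < t).card := by
  have hinj : Function.Injective fun x : Fin m => x - a := fun x y h => by
    have h' : ((x - a : Fin m) : ℕ) = ((y - a : Fin m) : ℕ) := congrArg Fin.val h
    rw [sub_val_eq_cycDist, sub_val_eq_cycDist] at h'
    exact cycDist_inj h'
  have hcard : ∀ (I : Finset (Fin m)) (t : ℕ),
      ((I.image (· - a)).filter fun x : Fin m => (x : ℕ) < t).card =
        (I.filter fun x => cycDist a x < t).card := by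
    intro I t
    rw [filter_image, card_image_of_injective _ hinj]
    simp only [sub_val_eq_cycDist]
  unfold sdomLE
  rw [domLE_iff (by rw [card_image_of_injective _ hinj, hI])
    (by rw [card_image_of_injective _ hinj, hJ])]
  simp only [hcard]

/-- The next point in clockwise order. -/
def cycSucc {N : ℕ} (x : Fin N) : Fin N :=
  if h : (x : ℕ) + 1 < N then ⟨x + 1, h⟩ else ⟨0, by have := x.isLt; omega⟩

lemma cycSucc_val {N : ℕ} (x : Fin N) :
    (cycSucc x : ℕ) = if (x : ℕ) + 1 < N then (x : ℕ) + 1 else 0 := by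
  unfold cycSucc
  split_ifs <;> rfl

lemma cycSucc_injective {N : ℕ} : Function.Injective (cycSucc : Fin N → Fin N) := fun x y h => by
  have h' := congrArg Fin.val h
  rw [cycSucc_val, cycSucc_val] at h'
  have := x.isLt
  have := y.isLt
  ext
  split_ifs at h' <;> omega

lemma cycDist_cycSucc {N : ℕ} {a x : Fin N} (h : cycSucc x ≠ a) :
    cycDist a (cycSucc x) = cycDist a x + 1 := by
  rw [Ne, Fin.ext_iff, cycSucc_val] at h
  have := a.isLt
  have := x.isLt
  unfold cycDist
  rw [cycSucc_val]
  split_ifs at * <;> omega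

/-- The points preceding an opener other than `a`, when the circle is cut before `a`. -/
def openerSet {N : ℕ} (τ : Fin N → Fin N) (a : Fin N) : Finset (Fin N) :=
  univ.filter fun x => cycSucc x ≠ a ∧ cycDist a (cycSucc x) < cycDist a (τ (cycSucc x))

lemma card_filter_openerSet {N : ℕ} {τ : Fin N → Fin N} (hτ : IsMatching τ) (a : Fin N) (t : ℕ) :
    ((openerSet τ a).filter fun x => cycDist a x < t).card + 1 =
      openerCount τ (cycDist a) (t + 1) := by
  have e : (univ.filter fun i => cycDist a i < t + 1 ∧ cycDist a i < cycDist a (τ i)) =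
      insert a (((openerSet τ a).filter fun x => cycDist a x < t).image cycSucc) := by
    ext p
    obtain ⟨x, rfl⟩ := Finite.surjective_of_injective (cycSucc_injective (N := N)) p
    simp only [mem_filter, mem_univ, true_and, mem_insert, mem_image, openerSet,
      cycSucc_injective.eq_iff, exists_eq_right]
    by_cases hx : cycSucc x = a
    · have h0 : cycDist a a = 0 := by simp [cycDist]
      have h1 : cycDist a (τ a) ≠ 0 := fun h => hτ.2 a (cycDist_inj (h.trans h0.symm))
      simp only [hx, true_or, iff_true]
      omega
    · have := cycDist_cycSucc hx
      simp only [hx, false_or, not_false_iff, Ne, true_and]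
      omega
  unfold openerCount
  rw [e, card_insert_of_notMem, card_image_of_injective _ cycSucc_injective]
  simp only [mem_image, mem_filter, openerSet, not_exists, not_and]
  exact fun x hx h => hx.1.2.1 h

lemma card_openerSet {n : ℕ} {τ : Fin (2 * n) → Fin (2 * n)} (hτ : IsMatching τ)
    (a : Fin (2 * n)) : (openerSet τ a).card = n - 1 := by
  have h1 := card_filter_openerSet hτ a (2 * n)
  rw [filter_true_of_mem fun x _ => cycDist_lt a x] at h1
  have h2 := cutNum_add_eq_openerCount hτ (κ := cycDist a) (fun _ _ h => cycDist_inj h)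
    (s := fun _ => True) (t := 2 * n + 1) fun i => by
      have := cycDist_lt a i
      simp only [true_iff]
      omega
  rw [(cutNum_eq_zero (s := fun _ => True)).2 fun _ => Iff.rfl] at h2
  simp only [filter_true, card_univ, Fintype.card_fin] at h2
  omega

lemma sdomLE_openerSet_iff {n : ℕ} {m τ : Fin (2 * n) → Fin (2 * n)} (hm : IsMatching m)
    (hτ : IsMatching τ) (a : Fin (2 * n)) :
    sdomLE (n - 1) a (openerSet τ a) (openerSet m a) ↔
      ∀ t : ℕ, cutNum m (fun i => cycDist a i < t) ≤ cutNum τ (fun i => cycDist a i < t) := by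
  rw [sdomLE_iff (card_openerSet hτ a) (card_openerSet hm a)]
  have key : ∀ t : ℕ, ((openerSet m a).filter fun x => cycDist a x < t).card ≤
      ((openerSet τ a).filter fun x => cycDist a x < t).card ↔
      cutNum m (fun i => cycDist a i < t + 1) ≤ cutNum τ (fun i => cycDist a i < t + 1) := by
    intro t
    have h1 := card_filter_openerSet hm a t
    have h2 := card_filter_openerSet hτ a t
    have h3 := cutNum_add_eq_openerCount hm (κ := cycDist a) (fun _ _ h => cycDist_inj h)
      (s := fun i => cycDist a i < t + 1) (t := t + 1) fun i => Iff.rfl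
    have h4 := cutNum_add_eq_openerCount hτ (κ := cycDist a) (fun _ _ h => cycDist_inj h)
      (s := fun i => cycDist a i < t + 1) (t := t + 1) fun i => Iff.rfl
    omega
  simp only [key]
  refine ⟨fun h t => ?_, fun h t => h (t + 1)⟩
  cases t with
  | zero =>
    rw [cutNum_eq_zero.2 fun i => by omega]
    exact Nat.zero_le _
  | succ t => exact h t

lemma gTau_mul_add (n : ℕ) (τ : Fin (2 * n) → Fin (2 * n)) (q : ℤ) (r : Fin (2 * n)) :
    gTau n τ (((2 * n : ℕ) : ℤ) * q + (r : ℕ)) = ((2 * n : ℕ) : ℤ) * q +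
      (if r < τ r then ((τ r : ℕ) : ℤ) else ((τ r : ℕ) : ℤ) + 2 * n) := by
  have hr : (((2 * n : ℕ) : ℤ) * q + (r : ℕ)) % ((2 * n : ℕ) : ℤ) = (r : ℕ) := by
    rw [Int.mul_add_emod_self_left, Int.emod_eq_of_lt (by omega) (by have := r.isLt; omega)]
  unfold gTau
  simp only [hr, Int.toNat_natCast, r.isLt, dif_pos]
  ring_nf

lemma necklaceI_fTau {n : ℕ} {τ : Fin (2 * n) → Fin (2 * n)} (hτ : IsMatching τ)
    (a : Fin (2 * n)) : necklaceI (2 * n) (fTau n τ) ((a : ℕ) : ℤ) = openerSet τ a := by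
  have ha := a.isLt
  ext x
  have hx := x.isLt
  unfold necklaceI openerSet
  rw [mem_filter, mem_filter]
  simp only [fTau, mem_univ, true_and, Ne, Fin.ext_iff]
  constructor
  · rintro ⟨b, hb, hab, hmod⟩
    obtain ⟨q, r, rfl⟩ : ∃ (q : ℤ) (r : Fin (2 * n)), b = ((2 * n : ℕ) : ℤ) * q + (r : ℕ) := by
      have h0 := Int.emod_nonneg b (b := ((2 * n : ℕ) : ℤ)) (by omega)
      have h1 := Int.emod_lt_of_pos b (b := ((2 * n : ℕ) : ℤ)) (by omega)
      refine ⟨b / ((2 * n : ℕ) : ℤ), ⟨(b % ((2 * n : ℕ) : ℤ)).toNat, by omega⟩, ?_⟩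
      have := Int.mul_ediv_add_emod b ((2 * n : ℕ) : ℤ)
      simp only
      omega
    rw [gTau_mul_add] at hab hmod
    rw [add_sub_assoc, Int.mul_add_emod_self_left] at hmod
    have hr := r.isLt
    have hr' := (τ r).isLt
    have hne : ((τ r : Fin (2 * n)) : ℕ) ≠ r := fun h => hτ.2 r (Fin.ext h)
    have hsucc : cycSucc x = τ r := by
      rw [Fin.ext_iff, cycSucc_val]
      split_ifs at hmod with hlt
      · rw [Fin.lt_def] at hlt
        rw [Int.emod_eq_of_lt (by omega) (by omega)] at hmod
        split_ifs <;> omega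
      · by_cases h0 : (τ r : ℕ) = 0
        · rw [Int.emod_eq_of_lt (by omega) (by omega)] at hmod
          split_ifs <;> omega
        · rw [add_sub_right_comm, show (2 * n : ℤ) = ((2 * n : ℕ) : ℤ) by push_cast; rfl,
            Int.add_emod_right, Int.emod_eq_of_lt (by omega) (by omega)] at hmod
          split_ifs <;> omega
    rw [hsucc, hτ.1 r]
    have hq : q = 0 ∨ q = -1 := by
      have h1 : q < 1 := by
        by_contra! h
        have := mul_le_mul_of_nonneg_left h (show (0 : ℤ) ≤ ((2 * n : ℕ) : ℤ) by omega)
        omega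
      have h2 : -2 < q := by
        by_contra! h
        have := mul_le_mul_of_nonneg_left h (show (0 : ℤ) ≤ ((2 * n : ℕ) : ℤ) by omega)
        simp only [Fin.lt_def] at hab
        split_ifs at hab <;> omega
      omega
    simp only [Fin.lt_def] at hab
    unfold cycDist
    rcases hq with rfl | rfl <;> split_ifs at * <;> omega
  · rintro ⟨h1, h2⟩
    rw [cycSucc_val] at h1
    have hsv := cycSucc_val x
    have hp := (cycSucc x).isLt
    have hr := (τ (cycSucc x)).isLt
    have hinv := hτ.1 (cycSucc x)
    have hne : ((τ (cycSucc x) : Fin (2 * n)) : ℕ) ≠ cycSucc x := fun h => hτ.2 _ (Fin.ext h)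
    unfold cycDist at h2
    have hval : ∀ q : ℤ, (((2 * n : ℕ) : ℤ) * q + (if τ (cycSucc x) < cycSucc x
        then ((cycSucc x : ℕ) : ℤ) else ((cycSucc x : ℕ) : ℤ) + 2 * n) - 1) % ((2 * n : ℕ) : ℤ) =
        (x : ℕ) := by
      intro q
      rw [add_sub_assoc, Int.mul_add_emod_self_left]
      simp only [Fin.lt_def]
      by_cases hx1 : (x : ℕ) + 1 < 2 * n
      · rw [if_pos hx1] at hsv
        split_ifs
        · rw [Int.emod_eq_of_lt (by omega) (by omega)]
          omega
        · rw [add_sub_right_comm, show (2 * n : ℤ) = ((2 * n : ℕ) : ℤ) by push_cast; rfl,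
            Int.add_emod_right, Int.emod_eq_of_lt (by omega) (by omega)]
          omega
      · rw [if_neg hx1] at hsv
        rw [if_neg (by omega), Int.emod_eq_of_lt (by omega) (by omega)]
        omega
    by_cases hra : (τ (cycSucc x) : ℕ) < a
    · refine ⟨((2 * n : ℕ) : ℤ) * 0 + (τ (cycSucc x) : ℕ), by omega, ?_, ?_⟩
      · rw [gTau_mul_add, hinv]
        simp only [Fin.lt_def]
        split_ifs at * <;> omega
      · rw [gTau_mul_add, hinv]
        exact hval 0
    · refine ⟨((2 * n : ℕ) : ℤ) * (-1) + (τ (cycSucc x) : ℕ), by omega, ?_, ?_⟩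
      · rw [gTau_mul_add, hinv]
        simp only [Fin.lt_def]
        split_ifs at * <;> omega
      · rw [gTau_mul_add, hinv]
        exact hval (-1)

lemma sameBlock_refl {n : ℕ} (σ : NCP n) (i : Fin n) : sameBlock σ i i := by
  obtain ⟨B, hB, hi⟩ := σ.exists_mem (mem_univ i)
  exact ⟨B, hB, hi, hi⟩

lemma sameBlock.symm {n : ℕ} {σ : NCP n} {i j : Fin n} (h : sameBlock σ i j) :
    sameBlock σ j i := by
  obtain ⟨B, hB, hi, hj⟩ := h
  exact ⟨B, hB, hj, hi⟩

lemma sameBlock.trans {n : ℕ} {σ : NCP n} {i j k : Fin n} (h : sameBlock σ i j)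
    (h' : sameBlock σ j k) : sameBlock σ i k := by
  obtain ⟨B, hB, hi, hj⟩ := h
  obtain ⟨C, hC, hj', hk⟩ := h'
  obtain rfl := σ.eq_of_mem_parts hB hC hj hj'
  exact ⟨B, hB, hi, hk⟩

lemma mem_cIoo {n : ℕ} {j i x : Fin n} :
    x ∈ cIoo j i ↔ ((j : ℕ) < i ∧ (j : ℕ) < x ∧ (x : ℕ) < i) ∨
      ((i : ℕ) ≤ j ∧ ((j : ℕ) < x ∨ (x : ℕ) < i) ∧ (x : ℕ) ≠ j ∧ (x : ℕ) ≠ i) := by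
  simp only [cIoo, mem_filter, mem_univ, true_and, Fin.lt_def, Ne, Fin.ext_iff]
  split_ifs <;> omega

lemma cyclicPred_iff {n : ℕ} {σ : NCP n} {j i : Fin n} :
    cyclicPred σ j i ↔ sameBlock σ j i ∧ ∀ x, sameBlock σ x i → x ∉ cIoo j i := by
  constructor
  · rintro ⟨B, hB, hi, hj, h⟩
    refine ⟨⟨B, hB, hj, hi⟩, ?_⟩
    rintro x ⟨C, hC, hx, hi'⟩
    obtain rfl := σ.eq_of_mem_parts hB hC hi hi'
    exact h x hx
  · rintro ⟨⟨B, hB, hj, hi⟩, h⟩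
    exact ⟨B, hB, hi, hj, fun x hx => h x ⟨B, hB, hx, hi⟩⟩

lemma exists_cyclicPred {n : ℕ} (σ : NCP n) (i : Fin n) : ∃ j, cyclicPred σ j i := by
  obtain ⟨j, hj, hmin⟩ := exists_min_image (univ.filter fun y => sameBlock σ y i)
    (fun y => if y = i then n else cycDist y i) ⟨i, by simp [sameBlock_refl]⟩
  simp only [mem_filter, mem_univ, true_and] at hj hmin
  refine ⟨j, cyclicPred_iff.2 ⟨hj, fun x hx hmem => ?_⟩⟩
  have h := hmin x hx
  rw [mem_cIoo] at hmem
  have := x.isLt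
  have := i.isLt
  have := j.isLt
  simp only [cycDist, Fin.ext_iff] at h
  split_ifs at h <;> omega

lemma exists_cyclicSucc {n : ℕ} (σ : NCP n) (j : Fin n) : ∃ i, cyclicPred σ j i := by
  obtain ⟨i, hi, hmin⟩ := exists_min_image (univ.filter fun y => sameBlock σ y j)
    (fun y => if y = j then n else cycDist j y) ⟨j, by simp [sameBlock_refl]⟩
  simp only [mem_filter, mem_univ, true_and] at hi hmin
  refine ⟨i, cyclicPred_iff.2 ⟨hi.symm, fun x hx hmem => ?_⟩⟩
  have h := hmin x (hx.trans hi)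
  rw [mem_cIoo] at hmem
  have := x.isLt
  have := i.isLt
  have := j.isLt
  simp only [cycDist, Fin.ext_iff] at h
  split_ifs at h <;> omega

lemma bar_val {n : ℕ} (i : Fin n) : (bar i : ℕ) = 2 * i := rfl

lemma til_val {n : ℕ} (i : Fin n) : (til i : ℕ) = 2 * i + 1 := rfl

lemma eq_bar_or_eq_til {n : ℕ} (x : Fin (2 * n)) : (∃ i, x = bar i) ∨ ∃ j, x = til j := by
  have := x.isLt
  rcases Nat.even_or_odd' (x : ℕ) with ⟨k, hk | hk⟩
  · exact Or.inl ⟨⟨k, by omega⟩, Fin.ext hk⟩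
  · exact Or.inr ⟨⟨k, by omega⟩, Fin.ext hk⟩

lemma IsMedialOf.apply_til {n : ℕ} {σ : NCP n} {m : Fin (2 * n) → Fin (2 * n)}
    (hmed : IsMedialOf σ m) (hm : IsMatching m) {j i : Fin n} (h : cyclicPred σ j i) :
    m (til j) = bar i := by
  rw [← (hmed i j).2 h, hm.1]

lemma IsMedialOf.exists_cyclicPred {n : ℕ} {σ : NCP n} {m : Fin (2 * n) → Fin (2 * n)}
    (hmed : IsMedialOf σ m) (hm : IsMatching m) (p : Fin (2 * n)) :
    ∃ i j : Fin n, cyclicPred σ j i ∧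
      (((p : ℕ) = 2 * i ∧ (m p : ℕ) = 2 * j + 1) ∨ ((p : ℕ) = 2 * j + 1 ∧ (m p : ℕ) = 2 * i)) := by
  rcases eq_bar_or_eq_til p with ⟨i, rfl⟩ | ⟨j, rfl⟩
  · obtain ⟨j, h⟩ := _root_.exists_cyclicPred σ i
    exact ⟨i, j, h, Or.inl ⟨rfl, by rw [(hmed i j).2 h, til_val]⟩⟩
  · obtain ⟨i, h⟩ := exists_cyclicSucc σ j
    exact ⟨i, j, h, Or.inr ⟨rfl, by rw [hmed.apply_til hm h, bar_val]⟩⟩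

/-- The noncrossing condition with coinciding points allowed. -/
lemma IsNoncrossing.sameBlock_of_le {n : ℕ} {σ : NCP n} (hσ : IsNoncrossing σ) {a b c d : Fin n}
    (h1 : a ≤ b) (h2 : b ≤ c) (h3 : c ≤ d) (h4 : sameBlock σ a c)
    (h5 : sameBlock σ b d) : sameBlock σ a b := by
  rcases h1.eq_or_lt with rfl | h1
  · exact sameBlock_refl σ a
  rcases h2.eq_or_lt with rfl | h2
  · exact h4
  rcases h3.eq_or_lt with rfl | h3
  · exact h4.trans h5.symm
  · exact hσ a b c d h1 h2 h3 h4 h5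

/-- The medial pairing of a noncrossing partition has no crossings. -/
lemma IsMedialOf.isNCMatching {n : ℕ} {σ : NCP n} {m : Fin (2 * n) → Fin (2 * n)}
    (hmed : IsMedialOf σ m) (hm : IsMatching m) (hσ : IsNoncrossing σ) : IsNCMatching m := by
  rintro ⟨a, b, c, d, hab, hbc, hcd, rfl, rfl⟩
  obtain ⟨i, j, h, hv⟩ := hmed.exists_cyclicPred hm a
  obtain ⟨i', j', h', hv'⟩ := hmed.exists_cyclicPred hm b
  rw [cyclicPred_iff] at h h'
  obtain ⟨hji, hgap⟩ := h
  obtain ⟨hji', hgap'⟩ := h'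
  have hcon : sameBlock σ i i' → False := by
    intro hii
    have h1 := hgap i' hii.symm
    have h2 := hgap j' (hji'.trans hii.symm)
    have h3 := hgap' i hii
    have h4 := hgap' j (hji.trans hii)
    rw [Fin.lt_def] at hab hbc hcd
    clear hgap hgap' hji hji' hii hmed hm hσ
    generalize (m a : ℕ) = ma at *
    generalize (m b : ℕ) = mb at *
    rw [mem_cIoo] at h1 h2 h3 h4
    rcases hv with ⟨ha, hc⟩ | ⟨ha, hc⟩ <;> rcases hv' with ⟨hb, hd⟩ | ⟨hb, hd⟩ <;> omega
  simp only [Fin.lt_def] at hab hbc hcd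
  refine hcon ?_
  rcases hv with ⟨ha, hc⟩ | ⟨ha, hc⟩ <;> rcases hv' with ⟨hb, hd⟩ | ⟨hb, hd⟩
  · exact hσ.sameBlock_of_le (c := j) (d := j') (Fin.le_def.2 (by omega))
      (Fin.le_def.2 (by omega)) (Fin.le_def.2 (by omega)) hji.symm hji'.symm
  · exact (hσ.sameBlock_of_le (c := j) (d := i') (Fin.le_def.2 (by omega))
      (Fin.le_def.2 (by omega)) (Fin.le_def.2 (by omega)) hji.symm hji').trans hji'
  · exact hji.symm.trans (hσ.sameBlock_of_le (c := i) (d := j') (Fin.le_def.2 (by omega))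
      (Fin.le_def.2 (by omega)) (Fin.le_def.2 (by omega)) hji hji'.symm)
  · exact (hji.symm.trans (hσ.sameBlock_of_le (c := i) (d := i') (Fin.le_def.2 (by omega))
      (Fin.le_def.2 (by omega)) (Fin.le_def.2 (by omega)) hji hji')).trans hji'

lemma mem_maxAt {N : ℕ} {a x : Fin N} {S : Finset (Fin N)} :
    x ∈ maxAt a S ↔ x ∈ S ∧ ∀ y ∈ S, cycDist a y ≤ cycDist a x := by
  simp only [maxAt, mem_filter, Fin.le_def, sub_val_eq_cycDist]

/-- If `w` is the element of `S` following `x ∈ S`, then `x` is the last element of `S` seen from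
`a` iff `w` does not come after `x`. -/
lemma mem_maxAt_iff_of_next {N : ℕ} {a x w : Fin N} {S : Finset (Fin N)} (hx : x ∈ S)
    (hw : w ∈ S) (hwx : w ≠ cycSucc x)
    (h : ∀ y ∈ S, y = x ∨ (w ≠ x ∧ cycDist x w ≤ cycDist x y)) :
    x ∈ maxAt a S ↔ ¬ (cycSucc x ≠ a ∧ cycDist a (cycSucc x) < cycDist a w) := by
  rw [mem_maxAt]
  constructor
  · rintro ⟨-, hmax⟩ ⟨hne, hlt⟩
    have := hmax w hw
    rw [cycDist_cycSucc hne] at hlt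
    omega
  · intro hn
    refine ⟨hx, fun y hy => ?_⟩
    rcases h y hy with rfl | ⟨hw', hle⟩
    · exact le_rfl
    have := a.isLt
    have := x.isLt
    have := w.isLt
    have := y.isLt
    by_cases hs : cycSucc x = a
    · rw [Fin.ext_iff, cycSucc_val] at hs
      unfold cycDist
      split_ifs at * <;> omega
    · have hd := cycDist_cycSucc hs
      have hwd : cycDist a w ≠ cycDist a (cycSucc x) := fun e => hwx (cycDist_inj e)
      have hlt : cycDist a w ≤ cycDist a x := by
        have : ¬ cycDist a (cycSucc x) < cycDist a w := fun e => hn ⟨hs, e⟩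
        omega
      rw [Ne, Fin.ext_iff] at hw'
      clear hd hwd hn hs
      unfold cycDist at *
      split_ifs at * <;> omega

lemma dualRel_iff {n : ℕ} {σ : NCP n} {i j : Fin n} :
    dualRel σ i j ↔ ∀ u v, sameBlock σ u v → ((u ≤ i ↔ u ≤ j) ↔ (v ≤ i ↔ v ≤ j)) := by
  rcases eq_or_ne i j with rfl | hij
  · simp [dualRel]
  have hij' : (i : ℕ) ≠ j := fun e => hij (Fin.ext e)
  have h1 : ∀ u, u ∈ cIoc i j ↔ ((i < j) ↔ ¬ (u ≤ i ↔ u ≤ j)) := fun u => by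
    simp only [cIoc, mem_filter, mem_univ, true_and, Fin.lt_def, Fin.le_def]
    split_ifs <;> omega
  have h2 : ∀ u, u ∈ cIoc j i ↔ ((i < j) ↔ (u ≤ i ↔ u ≤ j)) := fun u => by
    simp only [cIoc, mem_filter, mem_univ, true_and, Fin.lt_def, Fin.le_def]
    split_ifs <;> omega
  simp only [dualRel, hij, false_or]
  constructor
  · intro h u v huv
    obtain ⟨B, hB, hu, hv⟩ := huv
    by_contra hcon
    refine h ⟨B, hB, ?_⟩
    by_cases hu' : u ∈ cIoc i j
    · refine ⟨⟨u, mem_inter.2 ⟨hu, hu'⟩⟩, ⟨v, mem_inter.2 ⟨hv, ?_⟩⟩⟩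
      rw [h1] at hu'
      rw [h2]
      tauto
    · refine ⟨⟨v, mem_inter.2 ⟨hv, ?_⟩⟩, ⟨u, mem_inter.2 ⟨hu, ?_⟩⟩⟩
      · rw [h1] at hu' ⊢
        tauto
      · rw [h1] at hu'
        rw [h2]
        tauto
  · rintro h ⟨B, hB, ⟨u, hu⟩, ⟨v, hv⟩⟩
    rw [mem_inter] at hu hv
    have := h u v ⟨B, hB, hu.1, hv.1⟩
    have hu' := (h1 u).1 hu.2
    have hv' := (h2 v).1 hv.2
    tauto

lemma dualRel_congr_left {n : ℕ} {σ : NCP n} {i k : Fin n} (h : dualRel σ i k) (y : Fin n) :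
    dualRel σ i y ↔ dualRel σ k y := by
  simp only [dualRel_iff] at *
  refine forall_congr' fun u => forall_congr' fun v => imp_congr_right fun huv => ?_
  have := h u v huv
  tauto

lemma IsNoncrossing.between {n : ℕ} {σ : NCP n} (hσ : IsNoncrossing σ) {p q u v : Fin n}
    (hpq : sameBlock σ p q) (huv : sameBlock σ u v) (hpu : ¬ sameBlock σ p u) (h1 : p < u)
    (h2 : u < q) : p < v ∧ v < q := by
  constructor
  · by_contra! h
    rcases h.eq_or_lt with rfl | h
    · exact hpu huv.symm
    · exact hpu ((hσ v p u q h h1 h2 huv.symm hpq).symm.trans huv.symm)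
  · by_contra! h
    rcases h.eq_or_lt with rfl | h
    · exact hpu (hpq.trans huv.symm)
    · exact hpu (hσ p u q v h1 h2 h hpq huv)

/-- If `j` precedes `k + 1` in its block, then `j` follows `k` in its dual block. -/
lemma dualRel_of_cyclicPred {n : ℕ} {σ : NCP n} (hσ : IsNoncrossing σ) {j k : Fin n}
    (h : cyclicPred σ j (cycSucc k)) : dualRel σ k j := by
  rw [cyclicPred_iff] at h
  rw [dualRel_iff]
  intro u v huv
  have hk := cycSucc_val k
  have := k.isLt
  have := j.isLt
  have := u.isLt
  have := v.isLt
  generalize cycSucc k = k' at h hk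
  by_cases hu : sameBlock σ u k'
  · have h1 := h.2 u hu
    have h2 := h.2 v (huv.symm.trans hu)
    rw [mem_cIoo] at h1 h2
    simp only [Fin.le_def]
    split_ifs at hk <;> omega
  · have hv : ¬ sameBlock σ v k' := fun e => hu (huv.trans e)
    have hne : ∀ w, ¬ sameBlock σ w k' → (w : ℕ) ≠ k' ∧ (w : ℕ) ≠ j := fun w hw =>
      ⟨fun e => hw (Fin.ext e ▸ sameBlock_refl σ _), fun e => hw (Fin.ext e ▸ h.1)⟩
    have hb : ∀ {u v}, sameBlock σ u v → ¬ sameBlock σ u k' →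
        ((j < u ∧ u < k') → j < v ∧ v < k') ∧ ((k' < u ∧ u < j) → k' < v ∧ v < j) :=
      fun huv hu => ⟨fun hh => hσ.between h.1 huv (fun e => hu (e.symm.trans h.1)) hh.1 hh.2,
        fun hh => hσ.between h.1.symm huv (fun e => hu e.symm) hh.1 hh.2⟩
    have h1 := hb huv hu
    have h2 := hb huv.symm hv
    have h3 := hne u hu
    have h4 := hne v hv
    simp only [Fin.le_def, Fin.lt_def] at *
    split_ifs at hk <;> omega

lemma dualRel.next_le {n : ℕ} {σ : NCP n} {j k y : Fin n} (h : cyclicPred σ j (cycSucc k))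
    (hy : dualRel σ k y) : y = k ∨ (j ≠ k ∧ cycDist k j ≤ cycDist k y) := by
  have hb := dualRel_iff.1 hy (cycSucc k) j (cyclicPred_iff.1 h).1.symm
  have hk := cycSucc_val k
  have := k.isLt
  have := j.isLt
  have := y.isLt
  simp only [Fin.le_def, Fin.ext_iff, Ne, cycDist] at *
  split_ifs at * <;> omega

lemma cyclicPred.next_le {n : ℕ} {σ : NCP n} {i k y : Fin n} (h : cyclicPred σ k i)
    (hy : sameBlock σ k y) : y = k ∨ (i ≠ k ∧ cycDist k i ≤ cycDist k y) := by
  rw [cyclicPred_iff] at h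
  have hb := h.2 y (hy.symm.trans h.1)
  have := k.isLt
  have := i.isLt
  have := y.isLt
  simp only [mem_cIoo, Fin.ext_iff, Ne, cycDist] at *
  split_ifs at * <;> omega

lemma cycDist_bar {n : ℕ} (x y : Fin n) : cycDist (bar x) (bar y) = 2 * cycDist x y := by
  have := x.isLt
  have hx := bar_val x
  have hy := bar_val y
  unfold cycDist
  split_ifs <;> omega

lemma cycDist_til {n : ℕ} (x y : Fin n) : cycDist (til x) (til y) = 2 * cycDist x y := by
  have := x.isLt
  have hx := til_val x
  have hy := til_val y
  unfold cycDist
  split_ifs <;> omega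

lemma cycSucc_bar {n : ℕ} (k : Fin n) : cycSucc (bar k) = til k := by
  have := k.isLt
  ext
  rw [cycSucc_val, bar_val, til_val, if_pos (by omega)]

lemma cycSucc_til {n : ℕ} (k : Fin n) : cycSucc (til k) = bar (cycSucc k) := by
  have := k.isLt
  ext
  rw [cycSucc_val, bar_val, til_val, cycSucc_val]
  split_ifs <;> omega

lemma bar_injective {n : ℕ} : Function.Injective (bar : Fin n → Fin (2 * n)) := fun x y h => by
  have := congrArg Fin.val h
  rw [bar_val, bar_val] at this
  ext
  omega

lemma til_injective {n : ℕ} : Function.Injective (til : Fin n → Fin (2 * n)) := fun x y h => by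
  have := congrArg Fin.val h
  rw [til_val, til_val] at this
  ext
  omega

lemma bar_ne_til {n : ℕ} (i j : Fin n) : bar i ≠ til j := fun h => by
  have := congrArg Fin.val h
  rw [bar_val, til_val] at this
  omega

/-- The necklace of a noncrossing partition is the necklace of its medial pairing. -/
lemma IaP_eq_openerSet {n : ℕ} {σ : NCP n} {m : Fin (2 * n) → Fin (2 * n)}
    (hmed : IsMedialOf σ m) (hm : IsMatching m) (hσ : IsNoncrossing σ) (a : Fin (2 * n)) :
    IaP σ a = openerSet m a := by
  ext x
  simp only [IaP, openerSet, mem_sdiff, mem_univ, true_and, mem_union, mem_biUnion, mem_filter,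
    not_or]
  rcases eq_bar_or_eq_til x with ⟨k, rfl⟩ | ⟨k, rfl⟩
  · obtain ⟨i, hi⟩ := exists_cyclicSucc σ k
    obtain ⟨B, hB, hk, hiB⟩ := (cyclicPred_iff.1 hi).1
    have hdual : ¬ ∃ i, bar k ∈ maxAt a ((univ.filter (dualRel σ i)).image til) := by
      rintro ⟨i, h⟩
      obtain ⟨y, -, hy⟩ := mem_image.1 (mem_maxAt.1 h).1
      exact bar_ne_til _ _ hy.symm
    have hblock : (∃ C ∈ σ.parts, bar k ∈ maxAt a (C.image bar)) ↔
        bar k ∈ maxAt a (B.image bar) := by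
      refine ⟨?_, fun h => ⟨B, hB, h⟩⟩
      rintro ⟨C, hC, h⟩
      have hkC := bar_injective.mem_finset_image.1 (mem_maxAt.1 h).1
      rwa [σ.eq_of_mem_parts hB hC hk hkC]
    rw [hblock, mem_maxAt_iff_of_next (mem_image_of_mem _ hk) (mem_image_of_mem bar hiB)
      (by rw [cycSucc_bar]; exact bar_ne_til _ _)]
    · rw [cycSucc_bar, hmed.apply_til hm hi, not_not]
      exact and_iff_left hdual
    · intro y hy
      obtain ⟨y, hyB, rfl⟩ := mem_image.1 hy
      rw [bar_injective.eq_iff, bar_injective.ne_iff, cycDist_bar, cycDist_bar]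
      have := hi.next_le ⟨B, hB, hk, hyB⟩
      omega
  · obtain ⟨j, hj⟩ := exists_cyclicPred σ (cycSucc k)
    have hblock : ¬ ∃ C ∈ σ.parts, til k ∈ maxAt a (C.image bar) := by
      rintro ⟨C, -, h⟩
      obtain ⟨y, -, hy⟩ := mem_image.1 (mem_maxAt.1 h).1
      exact bar_ne_til _ _ hy
    have hdual : (∃ i, til k ∈ maxAt a ((univ.filter (dualRel σ i)).image til)) ↔
        til k ∈ maxAt a ((univ.filter (dualRel σ k)).image til) := by
      refine ⟨?_, fun h => ⟨k, h⟩⟩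
      rintro ⟨i, h⟩
      have hik := til_injective.mem_finset_image.1 (mem_maxAt.1 h).1
      simp only [mem_filter, mem_univ, true_and] at hik
      simpa only [dualRel_congr_left hik] using h
    rw [hdual, mem_maxAt_iff_of_next (x := til k) (w := til j)
      (mem_image_of_mem _ (mem_filter.2 ⟨mem_univ k, Or.inl rfl⟩))
      (mem_image_of_mem _ (mem_filter.2 ⟨mem_univ _, dualRel_of_cyclicPred hσ hj⟩))
      (by rw [cycSucc_til]; exact (bar_ne_til _ _).symm)]
    · rw [cycSucc_til, (hmed _ _).2 hj, not_not]
      exact and_iff_right hblock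
    · intro y hy
      obtain ⟨y, hyk, rfl⟩ := mem_image.1 hy
      rw [til_injective.eq_iff, til_injective.ne_iff, cycDist_til, cycDist_til]
      have := dualRel.next_le hj (mem_filter.1 hyk).2
      omega

theorem stmt18 (n : ℕ) (hn : 0 < n) (τ : Fin (2*n) → Fin (2*n)) (hτ : IsMatching τ)
    (σ : NCP n) (hσ : IsNoncrossing σ)
    (mσ : Fin (2*n) → Fin (2*n)) (hm : IsMatching mσ) (hmed : IsMedialOf σ mσ) :
    uncrossLE mσ τ ↔
      ∀ a : Fin (2*n),
        sdomLE (n-1) a (necklaceI (2*n) (fTau n τ) ((a:ℕ):ℤ)) (IaP σ a) := by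
  simp only [necklaceI_fTau hτ, IaP_eq_openerSet hmed hm hσ, sdomLE_openerSet_iff hm hτ]
  rw [forall_cutNum_cycDist_le_iff]
  exact ⟨fun h => h.cutNum_le,
    uncrossLE_of_cutNum_le hm (hmed.isNCMatching hm hσ) hτ⟩

end
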